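/- Sequential composition right-distributes over nondeterministic choice up to simulation equivalence: for probabilistic automata P, Q, R with pairwise disjoint state spaces, P · R + Q · R ≡ (P + Q) · R (where on the left the two occurrences of R are taken as disjoint copies). -/

import Mathlib

/-!
Merging the two copies of `R` gives a map from the states of `P · R + Q · R` onto those of
`(P + Q) · R` that both preserves and reflects transitions and final states. The graph of such a
functional bisimulation, read in either direction and with target states viewed as point masses, is
a probabilistic simulation.
-/

open scoped ENNReal

namespace PCKA

/-- A probabilistic automaton over the (non-silent) action alphabet `α`, with state
space `σ`.  Transition labels are `Option α`, where `none` plays the role of the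
silent action `τ`; `trans x a μ` means `x —a→ μ` where `μ` is a (countably
supported) probability distribution over states, `init` is the initial
distribution and `final` the set of final states. -/
structure PAut (α : Type) (σ : Type) where
  trans : σ → Option α → PMF σ → Prop
  init : PMF σ
  final : Set σ

/-- The lifting `S̄ ⊆ D(X) × D(Y)` of a relation `S ⊆ X × D(Y)`: `μ S̄ ν` iff there
are weights `p n` summing to `1`, states `x n` and distributions `νs n` with
`μ = Σ_n p n · δ_{x n}`, `x n S νs n` for each `n`, and `ν = Σ_n p n · νs n`. -/
def Lift {X Y : Type} (S : X → PMF Y → Prop) (μ : PMF X) (ν : PMF Y) : Prop :=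
  ∃ (p : ℕ → ℝ≥0∞) (x : ℕ → X) (νs : ℕ → PMF Y),
    (∑' n, p n) = 1 ∧
    (∀ s, μ s = ∑' n, p n * (PMF.pure (x n)) s) ∧
    (∀ n, S (x n) (νs n)) ∧
    (∀ t, ν t = ∑' n, p n * (νs n) t)

/-- The double lifting `T̿ ⊆ D(X) × D(Z)` of a relation `T ⊆ X × Z`, via a weight
function `w`. -/
def DLift {X Z : Type} (T : X → Z → Prop) (μ : PMF X) (ψ : PMF Z) : Prop :=
  ∃ w : X → Z → ℝ≥0∞,
    (∀ x z, 0 < w x z → T x z) ∧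
    (∀ x, (∑' z, w x z) = μ x) ∧
    (∀ z, (∑' x, w x z) = ψ z)

/-- Flattening `π : D(D(Y)) → D(Y)`, `π(ψ) = Σ_{ν} ψ(ν)·ν`. -/
noncomputable def flat {Y : Type} (ψ : PMF (PMF Y)) : PMF Y := ψ.bind id

/-- Single transition step, with the τ-transitions extended by reflexivity
(`x —τ→ δ_x` is always allowed). -/
def step {α σ : Type} (P : PAut α σ) (a : Option α) (x : σ) (μ : PMF σ) : Prop :=
  P.trans x a μ ∨ (a = none ∧ μ = PMF.pure x)

/-- Weak internal moves `⇒`: the reflexive-transitive closure of the lifted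
(extended) τ-transition relation on distributions. -/
def WeakTau {α σ : Type} (P : PAut α σ) : PMF σ → PMF σ → Prop :=
  Relation.ReflTransGen (Lift (step P none))

/-- Weak `a`-transition `μ ⇒^a μ'`: `μ ⇒ μ₁ —ā→ μ₂ ⇒ μ'`. -/
def WeakStep {α σ : Type} (P : PAut α σ) (a : Option α) (μ μ' : PMF σ) : Prop :=
  ∃ μ₁ μ₂, WeakTau P μ μ₁ ∧ Lift (step P a) μ₁ μ₂ ∧ WeakTau P μ₂ μ'

/-- A probabilistic simulation from `P` to `Q` (Deng et al. style). -/
structure IsSimulation {α σ τ' : Type} (P : PAut α σ) (Q : PAut α τ')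
    (S : σ → PMF τ' → Prop) : Prop where
  init : ∃ ν₀', WeakTau Q Q.init ν₀' ∧ Lift S P.init ν₀'
  step : ∀ x a μ', P.trans x a μ' → ∀ ν, S x ν →
    ∃ ν', WeakStep Q a ν ν' ∧ Lift S μ' ν'
  final : ∀ x ν, x ∈ P.final → S x ν →
    ∃ ν', WeakTau Q ν ν' ∧ ∀ y ∈ ν'.support, y ∈ Q.final

/-- A probabilistic weak forward simulation from `P` to `Q` (Segala style). -/
structure IsWFSimulation {α σ τ' : Type} (P : PAut α σ) (Q : PAut α τ')
    (S : σ → PMF τ' → Prop) : Prop where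
  init : ∃ ψ₀ : PMF (PMF τ'), DLift S P.init ψ₀ ∧ WeakTau Q Q.init (flat ψ₀)
  step : ∀ x a μ', P.trans x a μ' → ∀ ν, S x ν →
    ∃ ψ : PMF (PMF τ'), WeakStep Q a ν (flat ψ) ∧ DLift S μ' ψ
  final : ∀ x ν, x ∈ P.final → S x ν →
    ∃ ψ : PMF (PMF τ'), (∀ ρ ∈ ψ.support, ∀ y ∈ ρ.support, y ∈ Q.final) ∧
      WeakTau Q ν (flat ψ)

/-- `P ≤ Q`: there exists a probabilistic simulation from `P` to `Q`. -/
def Sim {α σ τ' : Type} (P : PAut α σ) (Q : PAut α τ') : Prop :=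
  ∃ S, IsSimulation P Q S

/-- Simulation equivalence `P ≡ Q`. -/
def SimEquiv {α σ τ' : Type} (P : PAut α σ) (Q : PAut α τ') : Prop :=
  Sim P Q ∧ Sim Q P

/-- Convex combination `p·μ + (1−p)·ν` of two distributions. -/
noncomputable def mix {X : Type} (p : ℝ≥0∞) (hp : p ≤ 1) (μ ν : PMF X) : PMF X :=
  ⟨fun x => p * μ x + (1 - p) * ν x, by
    refine ENNReal.summable.hasSum_iff.mpr ?_
    rw [ENNReal.tsum_add, ENNReal.tsum_mul_left, ENNReal.tsum_mul_left,
      μ.tsum_coe, ν.tsum_coe, mul_one, mul_one, add_tsub_cancel_of_le hp]⟩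

/-- Product distribution `μ × ν`, with `(μ × ν)(x,y) = μ(x)·ν(y)`. -/
noncomputable def pprod {X Y : Type} (μ : PMF X) (ν : PMF Y) : PMF (X × Y) :=
  μ.bind fun x => ν.map fun y => (x, y)

/-- The skip automaton `1`: one state, no transitions, that state is final. -/
noncomputable def skip (α : Type) : PAut α Unit :=
  ⟨fun _ _ _ => False, PMF.pure (), Set.univ⟩

/-- The deadlock automaton `0`: one state, no transitions, no final state. -/
noncomputable def deadlock (α : Type) : PAut α Unit :=
  ⟨fun _ _ _ => False, PMF.pure (), ∅⟩

/-- Nondeterministic choice `P + Q`: disjoint union of the two automata (realised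
by the sum type) plus a fresh initial state `z = none` with `z —τ→ μ₀` and
`z —τ→ ν₀`. -/
noncomputable def nchoice {α σ τ' : Type} (P : PAut α σ) (Q : PAut α τ') :
    PAut α (Option (σ ⊕ τ')) where
  trans := fun s a μ =>
    match s with
    | none => a = none ∧
        (μ = P.init.map (fun x => some (Sum.inl x)) ∨
         μ = Q.init.map (fun y => some (Sum.inr y)))
    | some (Sum.inl x) => ∃ μ', P.trans x a μ' ∧ μ = μ'.map (fun x => some (Sum.inl x))
    | some (Sum.inr y) => ∃ ν', Q.trans y a ν' ∧ μ = ν'.map (fun y => some (Sum.inr y))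
  init := PMF.pure none
  final := {s | (∃ x ∈ P.final, s = some (Sum.inl x)) ∨ (∃ y ∈ Q.final, s = some (Sum.inr y))}

/-- Sequential composition `P · Q`: disjoint union (realised by the sum type),
with a τ-transition from each final state of `P` to the initial distribution of
`Q`; initial distribution that of `P`, final states those of `Q`. -/
noncomputable def pseq {α σ τ' : Type} (P : PAut α σ) (Q : PAut α τ') :
    PAut α (σ ⊕ τ') where
  trans := fun s a μ =>
    match s with
    | Sum.inl x =>
        (∃ μ', P.trans x a μ' ∧ μ = μ'.map Sum.inl) ∨
        (a = none ∧ x ∈ P.final ∧ μ = Q.init.map Sum.inr)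
    | Sum.inr y => ∃ ν', Q.trans y a ν' ∧ μ = ν'.map Sum.inr
  init := P.init.map Sum.inl
  final := {s | ∃ y ∈ Q.final, s = Sum.inr y}

/-- Kleene star `P*`: a fresh state `z = none` which is initial and the only
final state, with `z —τ→ μ₀` and `x —τ→ δ_z` for each final state `x` of `P`. -/
noncomputable def pstar {α σ : Type} (P : PAut α σ) : PAut α (Option σ) where
  trans := fun s a μ =>
    match s with
    | none => a = none ∧ μ = P.init.map some
    | some x =>
        (∃ μ', P.trans x a μ' ∧ μ = μ'.map some) ∨
        (a = none ∧ x ∈ P.final ∧ μ = PMF.pure none)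
  init := PMF.pure none
  final := {none}

/-- Probabilistic choice `P ⊕_p Q`: disjoint union with initial distribution
`p·μ₀ + (1−p)·ν₀`. -/
noncomputable def pchoice {α σ τ' : Type} (p : ℝ≥0∞) (hp : p ≤ 1)
    (P : PAut α σ) (Q : PAut α τ') : PAut α (σ ⊕ τ') where
  trans := fun s a μ =>
    match s with
    | Sum.inl x => ∃ μ', P.trans x a μ' ∧ μ = μ'.map Sum.inl
    | Sum.inr y => ∃ ν', Q.trans y a ν' ∧ μ = ν'.map Sum.inr
  init := mix p hp (P.init.map Sum.inl) (Q.init.map Sum.inr)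
  final := {s | (∃ x ∈ P.final, s = Sum.inl x) ∨ (∃ y ∈ Q.final, s = Sum.inr y)}

/-- CSP-style parallel composition `P ∥_A Q` synchronising on the frame `A`:
actions in `A` must be performed jointly, all other actions (including τ) are
interleaved. -/
noncomputable def par {α σ τ' : Type} (A : Set α) (P : PAut α σ) (Q : PAut α τ') :
    PAut α (σ × τ') where
  trans := fun s a μπ => ∃ μ ν, μπ = pprod μ ν ∧
    ((∃ b ∈ A, a = some b ∧ P.trans s.1 a μ ∧ Q.trans s.2 a ν) ∨
     ((∀ b ∈ A, a ≠ some b) ∧ P.trans s.1 a μ ∧ ν = PMF.pure s.2) ∨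
     ((∀ b ∈ A, a ≠ some b) ∧ Q.trans s.2 a ν ∧ μ = PMF.pure s.1))
  init := pprod P.init Q.init
  final := {s | s.1 ∈ P.final ∧ s.2 ∈ Q.final}

theorem map_congr_of_mem_support {X Y : Type*} {μ : PMF X} {f g : X → Y}
    (h : ∀ x ∈ μ.support, f x = g x) : μ.map f = μ.map g := by
  classical
  ext y
  simp only [PMF.map_apply]
  refine tsum_congr fun x => ?_
  by_cases hx : x ∈ μ.support
  · rw [h x hx]
  · simp [(μ.apply_eq_zero_iff x).2 hx]

theorem exists_map_nat_eq {X : Type*} (μ : PMF X) : ∃ (q : PMF ℕ) (x : ℕ → X), q.map x = μ := by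
  obtain ⟨x, hx⟩ := μ.support_countable.exists_eq_range μ.support_nonempty
  have leftInv : ∀ s ∈ μ.support, x (x.invFun s) = s := fun s hs =>
    Function.invFun_eq (hx.subset hs)
  refine ⟨μ.map x.invFun, x, ?_⟩
  rw [PMF.map_comp, map_congr_of_mem_support (f := x ∘ x.invFun) (g := id) leftInv, PMF.map_id]

/- `Lift` only mixes over `ℕ`; mixing over an arbitrary type is possible because distributions are
countably supported. -/
theorem lift_map_bind {ι : Type*} {X Y : Type} {S : X → PMF Y → Prop} (q : PMF ι) {g : ι → X}
    {k : ι → PMF Y} (h : ∀ i, S (g i) (k i)) : Lift S (q.map g) (q.bind k) := by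
  obtain ⟨p, i, rfl⟩ := exists_map_nat_eq q
  refine ⟨p, g ∘ i, k ∘ i, p.tsum_coe, fun s => ?_, fun n => h (i n), fun t => ?_⟩
  · rw [PMF.map_comp]
    rfl
  · rw [PMF.bind_map]
    rfl

theorem lift_pure {X Y : Type} {S : X → PMF Y → Prop} {x : X} {ν : PMF Y} (h : S x ν) :
    Lift S (PMF.pure x) ν := by
  simpa [PMF.pure_map] using lift_map_bind (PMF.pure ()) (fun _ => h)

section

variable {α σ τ' : Type} {A : PAut α σ} {B : PAut α τ'}

theorem weakStep_pure {a : Option α} {x : σ} {μ : PMF σ} (h : A.trans x a μ) :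
    WeakStep A a (PMF.pure x) μ :=
  ⟨_, _, .refl, lift_pure (.inl h), .refl⟩

/- The span `σ ← ι → τ'` stands for the relation `{(g i, k i)}`, and `ω : PMF ι` for a coupling of
its two marginals that is supported on this relation. -/
theorem sim_of_span {ι : Type*} (g : ι → σ) (k : ι → τ')
    (init : ∃ ω : PMF ι, A.init = ω.map g ∧ B.init = ω.map k)
    (step : ∀ i a μ, A.trans (g i) a μ → ∃ ω : PMF ι, μ = ω.map g ∧ B.trans (k i) a (ω.map k))
    (final : ∀ i, g i ∈ A.final → k i ∈ B.final) : Sim A B := by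
  let S (x : σ) (ν : PMF τ') : Prop := ∃ i, x = g i ∧ ν = PMF.pure (k i)
  have lift_map (ω : PMF ι) : Lift S (ω.map g) (ω.map k) := lift_map_bind ω fun i => ⟨i, rfl, rfl⟩
  refine ⟨S, ?_, ?_, ?_⟩
  · obtain ⟨ω, hA, hB⟩ := init
    exact ⟨B.init, .refl, hA ▸ hB ▸ lift_map ω⟩
  · rintro _ a μ hμ _ ⟨i, rfl, rfl⟩
    obtain ⟨ω, rfl, hω⟩ := step i a μ hμ
    exact ⟨ω.map k, weakStep_pure hω, lift_map ω⟩
  · rintro _ _ hx ⟨i, rfl, rfl⟩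
    refine ⟨PMF.pure (k i), .refl, fun y hy => ?_⟩
    rw [(PMF.mem_support_pure_iff _ _).1 hy]
    exact final i hx

/-- A functional bisimulation from `A` to `B`: a map of states preserving and reflecting
transitions and final states. Initial distributions are not mentioned, so that the inclusion of a
component into a composite automaton qualifies. -/
structure IsFunctionalBisimulation (A : PAut α σ) (B : PAut α τ') (f : σ → τ') : Prop where
  trans_iff : ∀ x a ν, B.trans (f x) a ν ↔ ∃ μ, A.trans x a μ ∧ ν = μ.map f
  mem_final_iff : ∀ x, f x ∈ B.final ↔ x ∈ A.final

end

namespace IsFunctionalBisimulation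

variable {α σ τ' υ : Type} {A : PAut α σ} {B : PAut α τ'} {C : PAut α υ}

theorem simEquiv {f : σ → τ'} (hf : IsFunctionalBisimulation A B f)
    (hinit : B.init = A.init.map f) : SimEquiv A B := by
  constructor
  · refine sim_of_span id f ⟨A.init, A.init.map_id.symm, hinit⟩ (fun x a μ hμ => ?_)
      fun x => (hf.mem_final_iff x).2
    exact ⟨μ, μ.map_id.symm, (hf.trans_iff x a _).2 ⟨μ, hμ, rfl⟩⟩
  · refine sim_of_span f id ⟨A.init, hinit, A.init.map_id.symm⟩ (fun x a ν hν => ?_)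
      fun x => (hf.mem_final_iff x).1
    obtain ⟨μ, hμ, rfl⟩ := (hf.trans_iff x a ν).1 hν
    exact ⟨μ, rfl, μ.map_id.symm ▸ hμ⟩

theorem nchoice_inl (A : PAut α σ) (B : PAut α τ') :
    IsFunctionalBisimulation A (nchoice A B) (fun x => some (Sum.inl x)) where
  trans_iff _ _ _ := Iff.rfl
  mem_final_iff x := by simp [nchoice]

theorem nchoice_inr (A : PAut α σ) (B : PAut α τ') :
    IsFunctionalBisimulation B (nchoice A B) (fun y => some (Sum.inr y)) where
  trans_iff _ _ _ := Iff.rfl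
  mem_final_iff y := by simp [nchoice]

theorem nchoice_elim {f : σ → υ} {g : τ' → υ} {z : υ} (hf : IsFunctionalBisimulation A C f)
    (hg : IsFunctionalBisimulation B C g)
    (hz_trans : ∀ a ν, C.trans z a ν ↔ a = none ∧ (ν = A.init.map f ∨ ν = B.init.map g))
    (hz_final : z ∉ C.final) :
    IsFunctionalBisimulation (nchoice A B) C (fun s => s.elim z (Sum.elim f g)) where
  trans_iff := by
    rintro (_ | x | y) a ν
    · simp [nchoice, hz_trans, PMF.map_comp, Function.comp_def, and_assoc]
    · simp [nchoice, hf.trans_iff, PMF.map_comp, Function.comp_def]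
    · simp [nchoice, hg.trans_iff, PMF.map_comp, Function.comp_def]
  mem_final_iff := by
    rintro (_ | x | y)
    · simp [nchoice, hz_final]
    · simp [nchoice, hf.mem_final_iff]
    · simp [nchoice, hg.mem_final_iff]

theorem pseq_sumMap {f : σ → τ'} (hf : IsFunctionalBisimulation A B f) (R : PAut α υ) :
    IsFunctionalBisimulation (pseq A R) (pseq B R) (Sum.map f id) where
  trans_iff := by
    rintro (x | r) a ν
    · simp [pseq, hf.trans_iff, hf.mem_final_iff, PMF.map_comp, Function.comp_def,
        and_assoc, or_and_right, exists_or]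
    · simp [pseq, PMF.map_comp, Function.comp_def]
  mem_final_iff := by
    rintro (x | r) <;> simp [pseq]

end IsFunctionalBisimulation

theorem pseq_nchoice_trans_none {α σ₁ σ₂ σ₃ : Type} (P : PAut α σ₁) (Q : PAut α σ₂)
    (R : PAut α σ₃) (a : Option α) (ν : PMF (Option (σ₁ ⊕ σ₂) ⊕ σ₃)) :
    (pseq (nchoice P Q) R).trans (Sum.inl none) a ν ↔ a = none ∧
      (ν = (pseq P R).init.map (Sum.map (fun x => some (Sum.inl x)) id) ∨
        ν = (pseq Q R).init.map (Sum.map (fun y => some (Sum.inr y)) id)) := by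
  simp [nchoice, pseq, PMF.map_comp, Function.comp_def, and_assoc]

/-- sequential composition right-distributes over nondeterministic
choice up to simulation equivalence: `P · R + Q · R ≡ (P + Q) · R` (the two
occurrences of `R` on the left are disjoint copies). -/
theorem seq_right_distrib_nchoice {α σ₁ σ₂ σ₃ : Type}
    (P : PAut α σ₁) (Q : PAut α σ₂) (R : PAut α σ₃) :
    SimEquiv (nchoice (pseq P R) (pseq Q R)) (pseq (nchoice P Q) R) := by
  have left : IsFunctionalBisimulation (pseq P R) (pseq (nchoice P Q) R)
      (Sum.map (fun x => some (Sum.inl x)) id) :=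
    .pseq_sumMap (.nchoice_inl P Q) R
  have right : IsFunctionalBisimulation (pseq Q R) (pseq (nchoice P Q) R)
      (Sum.map (fun y => some (Sum.inr y)) id) :=
    .pseq_sumMap (.nchoice_inr P Q) R
  have merge := left.nchoice_elim right (z := Sum.inl none)
    (pseq_nchoice_trans_none P Q R) (by simp [pseq])
  exact merge.simEquiv (by simp [nchoice, pseq, PMF.pure_map])

end PCKA
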